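/- arXiv:1903.07278 — 3 statements merged into one kernel-verified Lean document; each statement's English description precedes it below -/
import Mathlib

section
/- If an element w of the Weyl group W satisfies w(Φ^+) = Φ^+, then w is the identity of V. -/
/-!
Call a positive root simple if it spans an extreme ray of the cone generated by the positive roots.
A simple reflection `s_α` keeps positive every positive root `β` off the ray of `α`, since otherwise
`β + (-s_α β)` would be a point of that ray written as a sum of elements of the cone off the ray.
Pairing a positive root with itself under the invariant form produces a simple root having positive
pairing with it; reflecting in that simple root lowers `f`, so by induction on `f` every reflection
is a product of simple reflections.

If a word `s₁ ⋯ sₙ` in simple reflections sends a simple root `α` to a negative root, then some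
letter is the first, read from the right, to turn the image of `α` negative. That letter is the
conjugate of `s_α` by the word to its right, so it cancels against `s_α` and `s₁ ⋯ sₙ s_α` is a word
of length less than `n`. A nonempty word `s₁ ⋯ sₙ s_α` preserving positivity sends `α` to a positive
root, so `s₁ ⋯ sₙ` sends `α` to a negative one and the word can be shortened, eventually to `1`.
-/

open Module (Dual)
open PointedCone RootPairing Set
open Submodule (mem_span_insert mem_span_singleton span span_induction span_insert_eq_span span_le
  span_mono)

theorem exists_subset_span_eq_forall_notMem_span_sdiff {R M : Type*} [Semiring R]
    [AddCommMonoid M] [Module R M] {T : Set M} (hT : T.Finite) :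
    ∃ S ⊆ T, span R S = span R T ∧ ∀ a ∈ S, a ∉ span R (S \ {a}) := by
  have hfin : {S | S ⊆ T ∧ span R S = span R T}.Finite := hT.finite_subsets.subset fun _ hS ↦ hS.1
  obtain ⟨S, ⟨hST, hspan⟩, hmin⟩ := hfin.exists_minimal ⟨T, Subset.rfl, rfl⟩
  refine ⟨S, hST, hspan, fun a ha hmem ↦ ?_⟩
  have hspan' : span R (S \ {a}) = span R S := by
    rw [← span_insert_eq_span hmem, insert_sdiff_singleton, insert_eq_of_mem ha]
  exact (hmin ⟨sdiff_subset.trans hST, hspan'.trans hspan⟩ sdiff_subset ha).2 rfl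

section Cone

variable {K M : Type*} [Field K] [LinearOrder K] [IsStrictOrderedRing K]
  [AddCommGroup M] [Module K M] {f : Dual K M} {S : Set M} {a x y : M}

theorem mem_hull_singleton : x ∈ hull K {a} ↔ ∃ c : K, 0 ≤ c ∧ c • a = x := by
  simp [mem_span_singleton]

theorem apply_nonneg_of_mem_hull (hS : ∀ y ∈ S, 0 ≤ f y) (hx : x ∈ hull K S) : 0 ≤ f x :=
  (span_le (p := (positive K K).comap f)).2 hS hx

theorem eq_zero_of_mem_hull_of_apply_nonpos (hS : ∀ y ∈ S, 0 < f y) (hx : x ∈ hull K S)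
    (hfx : f x ≤ 0) : x = 0 := by
  have hnonneg {y : M} (hy : y ∈ hull K S) : 0 ≤ f y :=
    apply_nonneg_of_mem_hull (fun z hz ↦ (hS z hz).le) hy
  induction hx using span_induction with
  | mem y hy => exact absurd hfx (hS y hy).not_ge
  | zero => rfl
  | add y z hy hz ihy ihz =>
    rw [map_add] at hfx
    rw [ihy (by linarith [hnonneg hz]), ihz (by linarith [hnonneg hy]), add_zero]
  | smul c y _ ih =>
    obtain ⟨c, hc⟩ := c
    rw [Nonneg.mk_smul, map_smul, smul_eq_mul] at hfx
    obtain rfl | hc := hc.eq_or_lt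
    · exact zero_smul K y
    · rw [ih (nonpos_of_mul_nonpos_right hfx hc), smul_zero]

theorem mem_hull_singleton_of_add_eq_smul (hS : ∀ y ∈ S, 0 < f y) (ha : a ∈ S)
    (haS : a ∉ hull K (S \ {a})) (hx : x ∈ hull K S) (hy : y ∈ hull K S) {c : K}
    (hxy : x + y = c • a) : x ∈ hull K {a} := by
  rw [← insert_eq_of_mem ha, ← insert_sdiff_singleton] at hx hy
  obtain ⟨⟨p, hp⟩, u, hu, rfl⟩ := mem_span_insert.1 hx
  obtain ⟨⟨q, hq⟩, v, hv, rfl⟩ := mem_span_insert.1 hy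
  simp only [Nonneg.mk_smul] at hxy ⊢
  have huv : u + v = (c - p - q) • a := by
    linear_combination (norm := module) hxy
  have hcoeff : c - p - q ≤ 0 := by
    by_contra! hpos
    refine haS ((smul_mem_iff _ hpos).1 ?_)
    exact huv ▸ add_mem hu hv
  have hfuv : f (u + v) ≤ 0 := by
    rw [huv, map_smul, smul_eq_mul]
    exact mul_nonpos_of_nonpos_of_nonneg hcoeff (hS a ha).le
  have hS' : ∀ y ∈ S \ {a}, 0 < f y := fun y hy ↦ hS y hy.1
  have hfv : 0 ≤ f v := apply_nonneg_of_mem_hull (fun y hy ↦ (hS' y hy).le) hv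
  have hu0 : u = 0 :=
    eq_zero_of_mem_hull_of_apply_nonpos hS' hu (by rw [map_add] at hfuv; linarith)
  exact mem_hull_singleton.2 ⟨p, hp, by rw [hu0, add_zero]⟩

theorem isFaceOf_hull_singleton (hS : ∀ y ∈ S, 0 < f y) (ha : a ∈ S)
    (haS : a ∉ hull K (S \ {a})) : (hull K {a}).IsFaceOf (hull K S) where
  le := span_mono (singleton_subset_iff.2 ha)
  mem_of_smul_add_mem hx hy hr hxy := by
    obtain ⟨c, -, hc⟩ := mem_hull_singleton.1 hxy
    exact (smul_mem_iff _ hr).1 <|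
      mem_hull_singleton_of_add_eq_smul hS ha haS (smul_mem _ hr.le hx) hy hc.symm

end Cone

section Reflection

variable {ι R M N : Type*} [CommRing R] [AddCommGroup M] [Module R M] [AddCommGroup N] [Module R N]
  {P : RootPairing ι R M N}

theorem coroot'_indexEquiv_smul (g : P.Aut) (i : ι) (x : M) :
    P.coroot' (g.indexEquiv i) (g • x) = P.coroot' i x := by
  have htranspose := Hom.weight_coweight_transpose_apply P P (P.coroot (g.indexEquiv i)) g.toHom
  rw [Hom.coroot_coweightMap_apply, Equiv.symm_apply_apply] at htranspose
  exact DFunLike.congr_fun htranspose x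

theorem reflection_indexEquiv_eq_conj (g : P.Aut) (i : ι) :
    Equiv.reflection P (g.indexEquiv i) = g * Equiv.reflection P i * g⁻¹ := by
  rw [eq_mul_inv_iff_mul_eq]
  refine Equiv.weightHom_injective P (LinearEquiv.ext fun x ↦ ?_)
  change P.reflection (g.indexEquiv i) (g • x) = g • P.reflection i x
  simp only [reflection_apply, coroot'_indexEquiv_smul, Equiv.root_indexEquiv_eq_smul, smul_sub,
    smul_comm g]

theorem reflection_eq_of_root_eq_smul [Finite ι] [IsAddTorsionFree N] {i j : ι} {t : R}
    (h : P.root j = t • P.root i) : Equiv.reflection P j = Equiv.reflection P i := by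
  refine Equiv.weightHom_injective P (LinearEquiv.ext fun x ↦ ?_)
  change P.reflection j x = P.reflection i x
  simp only [reflection_apply, coroot', ← P.smul_coroot_eq_of_root_eq_smul i j t h, h, map_smul,
    smul_smul, LinearMap.smul_apply, smul_eq_mul, mul_comm]

end Reflection

section SimpleRoots

variable {ι K M N : Type*} [Field K] [LinearOrder K] [IsStrictOrderedRing K]
  [AddCommGroup M] [Module K M] [AddCommGroup N] [Module K N]
  {P : RootPairing ι K M N} {f : Dual K M} {i j : ι}

variable (P f) in
/-- The roots of `P` that are positive with respect to the linear functional `f`, as vectors. -/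
def positiveRoots : Set M := {x ∈ range P.root | 0 < f x}

variable (P f) in
/-- The index `i` is that of a simple root for the positive system cut out by `f`: a positive root
spanning an extreme ray of the cone of positive roots. When `P` is not reduced, all positive roots
on such a ray count as simple. -/
structure IsSimpleRoot (i : ι) : Prop where
  pos : 0 < f (P.root i)
  isFaceOf : (hull K {P.root i}).IsFaceOf (hull K (positiveRoots P f))

theorem hull_positiveRoots_le_hull_simpleRoots [Finite ι] :
    hull K (positiveRoots P f) ≤ hull K (P.root '' {i | IsSimpleRoot P f i}) := by
  have hfin : (positiveRoots P f).Finite := (finite_range P.root).subset (sep_subset _ _)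
  obtain ⟨S, hST, hhull, hS⟩ : ∃ S ⊆ positiveRoots P f,
      hull K S = hull K (positiveRoots P f) ∧ ∀ a ∈ S, a ∉ hull K (S \ {a}) :=
    exists_subset_span_eq_forall_notMem_span_sdiff hfin
  rw [← hhull]
  refine span_mono fun a ha ↦ ?_
  obtain ⟨⟨i, rfl⟩, hi⟩ := hST ha
  refine ⟨i, ⟨hi, ?_⟩, rfl⟩
  rw [← hhull]
  exact isFaceOf_hull_singleton (fun x hx ↦ (hST hx).2) ha (hS _ ha)

theorem IsSimpleRoot.apply_reflection_pos (hf : ∀ i, f (P.root i) ≠ 0) (hi : IsSimpleRoot P f i)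
    (hj : 0 < f (P.root j)) (hij : P.root j ∉ hull K {P.root i}) :
    0 < f (P.reflection i (P.root j)) := by
  by_contra! hle
  have hneg : 0 < f (-P.reflection i (P.root j)) := by
    rw [map_neg, neg_pos]
    exact hle.lt_of_ne (by simpa only [root_reflectionPerm] using hf (P.reflectionPerm i j))
  have hmem : -P.reflection i (P.root j) ∈ range P.root :=
    ⟨P.reflectionPerm i (P.reflectionPerm j j), by simp⟩
  have hsum : P.root j + -P.reflection i (P.root j) = P.pairing j i • P.root i := by
    rw [reflection_apply_root]
    module
  have hpairing : 0 < P.pairing j i * f (P.root i) := by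
    rw [← smul_eq_mul, ← map_smul, ← hsum, map_add]
    exact add_pos hj hneg
  refine hij (hi.isFaceOf.mem_of_add_mem_left (subset_hull ⟨mem_range_self j, hj⟩)
    (subset_hull ⟨hmem, hneg⟩) ?_)
  exact mem_hull_singleton.2 ⟨_, (pos_of_mul_pos_left hpairing hi.pos.le).le, hsum.symm⟩

theorem exists_isSimpleRoot_pairing_pos [Finite ι] (hj : 0 < f (P.root j)) :
    ∃ i, IsSimpleRoot P f i ∧ 0 < P.pairing j i := by
  by_contra! hpairing
  have := Fintype.ofFinite ι
  let B := (P.posRootForm K).toInvariantForm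
  have hBpos (k : ι) : 0 < B.form (P.root k) (P.root k) := by
    obtain ⟨c, hc, heq⟩ := (P.posRootForm K).exists_pos_eq k
    exact heq ▸ hc
  have hsimple : ∀ x ∈ P.root '' {i | IsSimpleRoot P f i}, 0 ≤ (-B.form (P.root j)) x := by
    rintro - ⟨i, hi, rfl⟩
    have htwo : 2 * B.form (P.root j) (P.root i) ≤ 0 := by
      rw [B.two_mul_apply_root_root]
      exact mul_nonpos_of_nonpos_of_nonneg (hpairing i hi) (hBpos i).le
    rw [LinearMap.neg_apply]
    linarith
  have hself : 0 ≤ (-B.form (P.root j)) (P.root j) :=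
    apply_nonneg_of_mem_hull hsimple <| hull_positiveRoots_le_hull_simpleRoots <|
      subset_hull ⟨mem_range_self j, hj⟩
  rw [LinearMap.neg_apply, neg_nonneg] at hself
  exact hself.not_gt (hBpos j)

variable (P f) in
/-- The reflections in the simple roots, as automorphisms of `P`; they are the generators with
respect to which word length in the Weyl group is measured. -/
def simpleReflections : Set P.Aut := Equiv.reflection P '' {i | IsSimpleRoot P f i}

theorem reflection_eq_of_root_mem_hull [Finite ι] (h : P.root j ∈ hull K {P.root i}) :
    Equiv.reflection P j = Equiv.reflection P i := by
  have : IsAddTorsionFree N := .of_isTorsionFree K N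
  obtain ⟨t, -, ht⟩ := mem_hull_singleton.1 h
  exact reflection_eq_of_root_eq_smul ht.symm

theorem reflection_mem_closure_simpleReflections_of_pos [Finite ι] (hf : ∀ i, f (P.root i) ≠ 0)
    (hj : 0 < f (P.root j)) :
    Equiv.reflection P j ∈ Submonoid.closure (simpleReflections P f) := by
  let _ : Preorder ι := Preorder.lift fun i ↦ f (P.root i)
  induction j using WellFoundedLT.induction with | ind j ih => ?_
  obtain ⟨i, hi, hpairing⟩ := exists_isSimpleRoot_pairing_pos hj
  have hri : Equiv.reflection P i ∈ Submonoid.closure (simpleReflections P f) :=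
    Submonoid.subset_closure (mem_image_of_mem _ hi)
  by_cases hji : P.root j ∈ hull K {P.root i}
  · rwa [reflection_eq_of_root_mem_hull hji]
  have hpos := hi.apply_reflection_pos hf hj hji
  have hlt : f (P.reflection i (P.root j)) < f (P.root j) := by
    rw [reflection_apply_root, map_sub, map_smul, smul_eq_mul]
    exact sub_lt_self _ (mul_pos hpairing hi.pos)
  rw [← root_reflectionPerm] at hpos hlt
  have hconj : Equiv.reflection P j =
      Equiv.reflection P i * Equiv.reflection P (P.reflectionPerm i j) * Equiv.reflection P i := by
    simpa using reflection_indexEquiv_eq_conj (Equiv.reflection P i) (P.reflectionPerm i j)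
  rw [hconj]
  exact mul_mem (mul_mem hri (ih _ hlt hpos)) hri

theorem weylGroup_le_closure_simpleReflections [Finite ι] (hf : ∀ i, f (P.root i) ≠ 0) :
    P.weylGroup.toSubmonoid ≤ Submonoid.closure (simpleReflections P f) := by
  rw [weylGroup_toSubmonoid, Submonoid.closure_le]
  rintro - ⟨j, rfl⟩
  obtain hj | hj := (hf j).lt_or_gt
  · have hneg : P.root (P.reflectionPerm j j) = (-1 : K) • P.root j := by simp
    have : IsAddTorsionFree N := .of_isTorsionFree K N
    rw [← reflection_eq_of_root_eq_smul hneg]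
    exact reflection_mem_closure_simpleReflections_of_pos hf (by simpa using hj)
  · exact reflection_mem_closure_simpleReflections_of_pos hf hj

theorem exists_prod_mul_reflection_eq [Finite ι] (hf : ∀ i, f (P.root i) ≠ 0)
    (hi : IsSimpleRoot P f i) {l : List P.Aut} (hl : ∀ g ∈ l, g ∈ simpleReflections P f)
    (hneg : f (l.prod • P.root i) < 0) :
    ∃ l' : List P.Aut, (∀ g ∈ l', g ∈ simpleReflections P f) ∧ l'.length < l.length ∧
      l.prod * Equiv.reflection P i = l'.prod := by
  induction l with
  | nil => exact absurd hneg (by simpa using hi.pos.le)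
  | cons r t ih =>
    obtain ⟨hr, ht⟩ := List.forall_mem_cons.1 hl
    obtain ⟨k, hk, rfl⟩ := hr
    have hroot : P.root (t.prod.indexEquiv i) = t.prod • P.root i :=
      Equiv.root_indexEquiv_eq_smul _ i t.prod
    obtain htneg | htpos := (hf (t.prod.indexEquiv i)).lt_or_gt
    · obtain ⟨l', hl', hlen, hprod⟩ := ih ht (hroot ▸ htneg)
      refine ⟨Equiv.reflection P k :: l', List.forall_mem_cons.2 ⟨mem_image_of_mem _ hk, hl'⟩,
        by simpa using hlen, ?_⟩
      rw [List.prod_cons, List.prod_cons, mul_assoc, hprod]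
    · have hray : P.root (t.prod.indexEquiv i) ∈ hull K {P.root k} := by
        by_contra hray
        refine (hk.apply_reflection_pos hf htpos hray).not_gt ?_
        rwa [hroot, ← Equiv.reflection_smul, ← mul_smul, ← List.prod_cons]
      refine ⟨t, ht, by simp, ?_⟩
      rw [List.prod_cons, ← reflection_eq_of_root_mem_hull hray, reflection_indexEquiv_eq_conj,
        inv_mul_cancel_right, mul_assoc, mul_eq_one_iff_inv_eq.2 (Equiv.reflection_inv P i),
        mul_one]

theorem prod_eq_one_of_forall_isSimpleRoot_pos [Finite ι] (hf : ∀ i, f (P.root i) ≠ 0)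
    {l : List P.Aut} (hl : ∀ g ∈ l, g ∈ simpleReflections P f)
    (hpos : ∀ i, IsSimpleRoot P f i → 0 < f (l.prod • P.root i)) : l.prod = 1 := by
  induction hn : l.length using Nat.strong_induction_on generalizing l with | _ n ih
  obtain rfl | ⟨t, r, rfl⟩ := l.eq_nil_or_concat'
  · rfl
  obtain ⟨ht, hr⟩ := List.forall_mem_append.1 hl
  obtain ⟨i, hi, rfl⟩ := hr r (List.mem_singleton_self r)
  have hneg : f (t.prod • P.root i) < 0 := by
    have hprod := hpos i hi
    rwa [List.prod_append, List.prod_singleton, mul_smul, Equiv.reflection_smul,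
      reflection_apply_self, smul_neg, map_neg, neg_pos] at hprod
  obtain ⟨l', hl', hlen, hprod⟩ := exists_prod_mul_reflection_eq hf hi ht hneg
  have heq : (t ++ [Equiv.reflection P i]).prod = l'.prod := by
    rw [List.prod_append, List.prod_singleton, hprod]
  rw [heq] at hpos ⊢
  refine ih _ ?_ hl' hpos rfl
  rw [← hn, List.length_append]
  exact Nat.lt_add_right _ hlen

theorem eq_one_of_mem_weylGroup_of_forall_pos [Finite ι] (hf : ∀ i, f (P.root i) ≠ 0) {w : P.Aut}
    (hw : w ∈ P.weylGroup) (hpos : ∀ i, 0 < f (P.root i) → 0 < f (w • P.root i)) : w = 1 := by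
  obtain ⟨l, hl, rfl⟩ :=
    Submonoid.exists_list_of_mem_closure (weylGroup_le_closure_simpleReflections hf hw)
  exact prod_eq_one_of_forall_isSimpleRoot_pos hf hl fun i hi ↦ hpos i hi.pos

end SimpleRoots

section Spanning

variable {K V : Type*} [Field K] [AddCommGroup V] [Module K V] {Φ : Set V} {coroot : V → Dual K V}

theorem injOn_coroot_of_mapsTo [CharZero K] (hfin : Φ.Finite) (hcoroot : ∀ α ∈ Φ, coroot α α = 2)
    (hmaps : ∀ α ∈ Φ, MapsTo (Module.preReflection α (coroot α)) Φ Φ) : InjOn coroot Φ := by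
  have : IsAddTorsionFree V := .of_isTorsionFree K V
  intro α hα β hβ h
  exact Module.eq_of_mapsTo_reflection_of_mem hfin (hcoroot α hα) (hcoroot β hβ)
    (h ▸ hcoroot α hα) (h ▸ hcoroot β hβ) (hmaps α hα) (hmaps β hβ) hβ

theorem exists_rootPairing_of_mapsTo_preReflection [CharZero K] (hfin : Φ.Finite)
    (hspan : span K Φ = ⊤) (hcoroot : ∀ α ∈ Φ, coroot α α = 2)
    (hmaps : ∀ α ∈ Φ, MapsTo (Module.preReflection α (coroot α)) Φ Φ) :
    ∃ P : RootPairing Φ K V (Dual K V), (∀ α, P.root α = α) ∧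
      ∀ α x, P.reflection α x = x - coroot α x • (α : V) := by
  have : Finite Φ := hfin
  have : FiniteDimensional K V := ⟨hfin.toFinset, by rwa [hfin.coe_toFinset]⟩
  let corootEmb : Φ ↪ Dual K V :=
    ⟨fun α ↦ coroot α, (injOn_coroot_of_mapsTo hfin hcoroot hmaps).injective⟩
  have hrange : range (.subtype Φ : Φ ↪ V) = Φ := Subtype.range_coe
  refine ⟨.mk'' (Dual.eval K V) (.subtype Φ) corootEmb (fun α ↦ hcoroot α α.2) (fun α ↦ ?_) ?_,
    fun _ ↦ rfl, fun _ _ ↦ rfl⟩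
  · rw [hrange]
    exact hmaps α α.2
  · rwa [hrange]

end Spanning

theorem weyl_fix_positive_system_eq_one_general {K V : Type*} [Field K] [LinearOrder K]
    [IsStrictOrderedRing K] [AddCommGroup V] [Module K V] {Φ : Set V} (hfin : Φ.Finite)
    (hspan : span K Φ = ⊤) {coroot : V → Dual K V} (hcoroot : ∀ α ∈ Φ, coroot α α = 2)
    {s : V → V ≃ₗ[K] V} (hs : ∀ α ∈ Φ, ∀ x, s α x = x - coroot α x • α)
    (hmaps : ∀ α ∈ Φ, MapsTo (s α) Φ Φ) {f : Dual K V} (hf : ∀ α ∈ Φ, f α ≠ 0) {w : V ≃ₗ[K] V}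
    (hw : w ∈ Subgroup.closure (s '' Φ)) (hpos : ∀ α ∈ Φ, 0 < f α → 0 < f (w α)) : w = 1 := by
  have : Finite Φ := hfin
  obtain ⟨P, hroot, hreflection⟩ := exists_rootPairing_of_mapsTo_preReflection hfin hspan hcoroot
    fun α hα x hx ↦ by simpa [Module.preReflection_apply, hs α hα] using hmaps α hα hx
  have hrange : s '' Φ = range P.reflection := by
    rw [image_eq_range]
    congr! 2 with α
    exact LinearEquiv.ext fun x ↦ by rw [hs α α.2, hreflection]
  rw [hrange, ← range_weylGroup_weightHom] at hw
  obtain ⟨⟨g, hg⟩, rfl⟩ := hw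
  have hone : g = 1 := eq_one_of_mem_weylGroup_of_forall_pos (f := f)
    (fun α ↦ hroot α ▸ hf α α.2) hg fun α ↦ hroot α ▸ hpos α α.2
  rw [Subtype.ext (a1 := ⟨g, hg⟩) (a2 := 1) hone, map_one]

/- STATEMENT 4: If an element `w` of the Weyl group `W` satisfies `w(Φ⁺) = Φ⁺`, then `w`
is the identity of `V`.

Here `Φ ⊆ V \ {0}` is a finite reduced root system spanning the finite-dimensional real
vector space `V`, `W` is the subgroup of `GL(V)` generated by the reflections `s_α`,
`f` is a linear functional nonvanishing on `Φ`, and `Φ⁺ := {α ∈ Φ | f α > 0}`. -/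
theorem weyl_fix_positive_system_eq_one
    (V : Type*) [AddCommGroup V] [Module ℝ V] [FiniteDimensional ℝ V]
    (Φ : Set V) (hfin : Φ.Finite) (h0 : (0 : V) ∉ Φ)
    (hspan : Submodule.span ℝ Φ = ⊤)
    (coroot : V → Module.Dual ℝ V)
    (hcoroot : ∀ α ∈ Φ, coroot α α = 2)
    (s : V → (V ≃ₗ[ℝ] V))
    (hs : ∀ α ∈ Φ, ∀ x : V, s α x = x - coroot α x • α)
    (hmaps : ∀ α ∈ Φ, ⇑(s α) '' Φ = Φ)
    (hred : ∀ α ∈ Φ, ∀ t : ℝ, t • α ∈ Φ → t = 1 ∨ t = -1)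
    (W : Subgroup (V ≃ₗ[ℝ] V)) (hW : W = Subgroup.closure (s '' Φ))
    (f : Module.Dual ℝ V) (hf : ∀ α ∈ Φ, f α ≠ 0)
    (Φplus : Set V) (hΦplus : Φplus = {α ∈ Φ | 0 < f α}) :
    ∀ w ∈ W, ⇑w '' Φplus = Φplus → w = 1 := by
  subst hW hΦplus
  exact fun w hw hfix ↦ weyl_fix_positive_system_eq_one_general hfin hspan hcoroot hs
    (fun α hα ↦ mapsTo_iff_image_subset.2 (hmaps α hα).subset) hf hw
    fun α hα hfα ↦ (hfix.subset (mem_image_of_mem w ⟨hα, hfα⟩)).2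
end

section
/- For any two linear functionals f, f' : V → ℝ that are nonvanishing on Φ, there exists an element w of the Weyl group W such that w({α ∈ Φ : f(α) > 0}) = {α ∈ Φ : f'(α) > 0}; that is, W acts transitively on the positive systems of Φ cut out by generic linear functionals. -/
/-!
On the dual of `V` consider the form `B(f, g) = ∑ α ∈ Φ, f α * g α`, which is invariant under the
Weyl group `W`. Since `W` permutes the finite set `Φ`, the number `B(f' ∘ w, f)` takes finitely many
values as `w` ranges over `W`; choose `w` maximizing it and put `g = f' ∘ w`. For a root `β`,
replacing `w` by `w * s_β` changes `B(g, f)` by `-g(β) B(β^∨, f)`, so `0 ≤ g(β) B(β^∨, f)`.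
Invariance under `s_β` gives `2 B(β^∨, f) = f(β) B(β^∨, β^∨)`, and `B(β^∨, β^∨)` is positive, so
`g = f' ∘ w` and `f` have the same sign on every root. Hence `w` carries the roots on which `f` is
positive to those on which `f'` is positive.
-/

open Module

lemma image_sep_eq_sep {E : Type*} {Φ : Set E} {w : E → E} (hw : w '' Φ = Φ) {p q : E → Prop}
    (hpq : ∀ α ∈ Φ, q (w α) ↔ p α) : w '' {α ∈ Φ | p α} = {α ∈ Φ | q α} :=
  calc
    w '' {α ∈ Φ | p α} = w '' (Φ ∩ w ⁻¹' {α | q α}) :=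
      congrArg _ (Set.ext fun α ↦ and_congr_right fun hα ↦ (hpq α hα).symm)
    _ = {α ∈ Φ | q α} := by rw [Set.image_inter_preimage, hw]; rfl

section CorootForm

variable {R V : Type*} [CommRing R] [AddCommGroup V] [Module R V]

/-- The canonical bilinear form `(f, g) ↦ ∑ α ∈ Φ, f α * g α` on the dual of `V`. It is the
analogue of `RootPairing.CorootForm` for an arbitrary finite set `Φ` of vectors, and serves to
compare functionals by their values on `Φ` in a way invariant under the symmetries of `Φ`. -/
def corootForm (Φ : Finset V) : LinearMap.BilinForm R (Dual R V) :=
  ∑ α ∈ Φ, (Dual.eval R V α).smulRight (Dual.eval R V α)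

lemma corootForm_apply (Φ : Finset V) (f g : Dual R V) :
    corootForm Φ f g = ∑ α ∈ Φ, f α * g α := by
  simp [corootForm]

lemma corootForm_dualMap_dualMap {Φ : Finset V} {w : V ≃ₗ[R] V} (hw : w '' Φ = Φ)
    (f g : Dual R V) : corootForm Φ (w.dualMap f) (w.dualMap g) = corootForm Φ f g := by
  have hbij : Set.BijOn w Φ Φ := ⟨Set.mapsTo_iff_image_subset.2 hw.subset, w.injective.injOn, hw.ge⟩
  simp only [corootForm_apply, LinearEquiv.dualMap_apply]
  exact Finset.sum_nbij w hbij.mapsTo hbij.injOn hbij.surjOn fun _ _ ↦ rfl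

lemma dualMap_reflection_apply {β : V} {φ : Dual R V} (hφ : φ β = 2) (f : Dual R V) :
    (reflection hφ).dualMap f = f - f β • φ := by
  ext x
  simp [reflection_apply, mul_comm]

lemma two_mul_corootForm_of_reflection_image_eq {Φ : Finset V} {β : V} {φ : Dual R V}
    (hφ : φ β = 2) (hΦ : reflection hφ '' Φ = Φ) (f : Dual R V) :
    2 * corootForm Φ φ f = f β * corootForm Φ φ φ := by
  have hinv := corootForm_dualMap_dualMap hΦ φ f
  simp only [dualMap_reflection_apply, hφ, map_sub, map_smul, LinearMap.sub_apply,
    LinearMap.smul_apply, smul_eq_mul] at hinv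
  linear_combination -hinv

lemma image_eq_of_mem_closure {S : Set (V ≃ₗ[R] V)} {Φ : Set V} (hS : ∀ g ∈ S, g '' Φ = Φ)
    {w : V ≃ₗ[R] V} (hw : w ∈ Subgroup.closure S) : w '' Φ = Φ := by
  open scoped Pointwise in
  have hle : Subgroup.closure S ≤ MulAction.stabilizer (V ≃ₗ[R] V) Φ :=
    (Subgroup.closure_le _).2 hS
  exact hle hw

variable [LinearOrder R]

lemma exists_isMaxOn_corootForm_dualMap {Φ : Finset V} {W : Set (V ≃ₗ[R] V)} (hW : W.Nonempty)
    (hΦ : ∀ w ∈ W, Set.MapsTo w Φ Φ) (f g : Dual R V) :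
    ∃ w ∈ W, IsMaxOn (fun u : V ≃ₗ[R] V ↦ corootForm Φ (u.dualMap f) g) W w := by
  set B : (V ≃ₗ[R] V) → R := fun u ↦ corootForm Φ (u.dualMap f) g with hB
  have hfinite : (B '' W).Finite := by
    -- `B w` depends only on the self-map of `Φ` induced by `w`.
    refine (Set.finite_range fun p : Φ → Φ ↦ ∑ α : Φ, f (p α) * g α).subset ?_
    rintro _ ⟨w, hw, rfl⟩
    refine ⟨(hΦ w hw).restrict, ?_⟩
    simp only [hB, corootForm_apply, LinearEquiv.dualMap_apply]
    exact Finset.sum_coe_sort Φ fun α ↦ f (w α) * g α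
  obtain ⟨_, ⟨w, hw, rfl⟩, hmax⟩ := Set.exists_max_image (B '' W) id hfinite (hW.image B)
  exact ⟨w, hw, fun u hu ↦ hmax (B u) ⟨u, hu, rfl⟩⟩

variable [IsStrictOrderedRing R]

lemma corootForm_self_pos {Φ : Finset V} {f : Dual R V} {α : V} (hα : α ∈ Φ) (hf : f α ≠ 0) :
    0 < corootForm Φ f f := by
  rw [corootForm_apply]
  exact Finset.sum_pos' (fun _ _ ↦ mul_self_nonneg _) ⟨α, hα, mul_self_pos.2 hf⟩

lemma mul_nonneg_of_corootForm_dualMap_reflection_le {Φ : Finset V} {β : V} (hβ : β ∈ Φ)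
    {φ : Dual R V} (hφ : φ β = 2) (hΦ : reflection hφ '' Φ = Φ) {f g : Dual R V}
    (hle : corootForm Φ ((reflection hφ).dualMap g) f ≤ corootForm Φ g f) :
    0 ≤ g β * f β := by
  have hpos : 0 < corootForm Φ φ φ := corootForm_self_pos hβ (by simp [hφ])
  have hnonneg : 0 ≤ g β * corootForm Φ φ f := by
    simpa [dualMap_reflection_apply] using hle
  refine nonneg_of_mul_nonneg_left ?_ hpos
  calc
    0 ≤ 2 * (g β * corootForm Φ φ f) := mul_nonneg zero_le_two hnonneg
    _ = g β * f β * corootForm Φ φ φ := by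
      linear_combination g β * two_mul_corootForm_of_reflection_image_eq hφ hΦ f

theorem weyl_transitive_on_positive_systems_general {Φ : Set V} (hfin : Φ.Finite)
    {coroot : V → Dual R V} (hcoroot : ∀ α ∈ Φ, coroot α α = 2)
    {s : V → (V ≃ₗ[R] V)} (hs : ∀ α ∈ Φ, ∀ x : V, s α x = x - coroot α x • α)
    (hmaps : ∀ α ∈ Φ, s α '' Φ = Φ) {f f' : Dual R V}
    (hf : ∀ α ∈ Φ, f α ≠ 0) (hf' : ∀ α ∈ Φ, f' α ≠ 0) :
    ∃ w ∈ Subgroup.closure (s '' Φ), w '' {α ∈ Φ | 0 < f α} = {α ∈ Φ | 0 < f' α} := by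
  lift Φ to Finset V using hfin
  have himage : ∀ w ∈ Subgroup.closure (s '' Φ), w '' Φ = Φ :=
    fun _ ↦ image_eq_of_mem_closure (Set.forall_mem_image.2 hmaps)
  obtain ⟨w, hw, hmax⟩ := exists_isMaxOn_corootForm_dualMap ⟨1, one_mem _⟩
    (fun w hw ↦ Set.mapsTo_iff_image_subset.2 (himage w hw).subset) f' f
  refine ⟨w, hw, image_sep_eq_sep (himage w hw) fun β hβ ↦ ?_⟩
  have hreflection : s β = reflection (hcoroot β hβ) := LinearEquiv.ext (hs β hβ)
  have hle : corootForm Φ ((s β).dualMap (w.dualMap f')) f ≤ corootForm Φ (w.dualMap f') f :=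
    hmax (mul_mem hw (Subgroup.subset_closure ⟨β, hβ, rfl⟩))
  have hnonneg : 0 ≤ f' (w β) * f β :=
    mul_nonneg_of_corootForm_dualMap_reflection_le hβ (hcoroot β hβ)
      (hreflection ▸ hmaps β hβ) (hreflection ▸ hle)
  have hwβ : w β ∈ (Φ : Set V) := (himage w hw).subset ⟨β, hβ, rfl⟩
  exact pos_iff_pos_of_mul_pos (hnonneg.lt_of_ne' (mul_ne_zero (hf' _ hwβ) (hf β hβ)))

end CorootForm

theorem weyl_transitive_on_positive_systems
    (V : Type*) [AddCommGroup V] [Module ℝ V] [FiniteDimensional ℝ V]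
    (Φ : Set V) (hfin : Φ.Finite) (h0 : (0 : V) ∉ Φ)
    (hspan : Submodule.span ℝ Φ = ⊤)
    (coroot : V → Module.Dual ℝ V)
    (hcoroot : ∀ α ∈ Φ, coroot α α = 2)
    (s : V → (V ≃ₗ[ℝ] V))
    (hs : ∀ α ∈ Φ, ∀ x : V, s α x = x - coroot α x • α)
    (hmaps : ∀ α ∈ Φ, ⇑(s α) '' Φ = Φ)
    (hred : ∀ α ∈ Φ, ∀ t : ℝ, t • α ∈ Φ → t = 1 ∨ t = -1)
    (W : Subgroup (V ≃ₗ[ℝ] V)) (hW : W = Subgroup.closure (s '' Φ)) :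
    ∀ f f' : Module.Dual ℝ V, (∀ α ∈ Φ, f α ≠ 0) → (∀ α ∈ Φ, f' α ≠ 0) →
      ∃ w ∈ W, ⇑w '' {α ∈ Φ | 0 < f α} = {α ∈ Φ | 0 < f' α} := by
  subst hW
  exact fun _ _ ↦ weyl_transitive_on_positive_systems_general hfin hcoroot hs hmaps
end

section
/- Γ is the semidirect product of W^0 by Γ^1: the set Γ^1 is a subgroup of Γ, W^0 is a normal subgroup of Γ, W^0 ∩ Γ^1 = {1}, and every element g ∈ Γ factors uniquely as g = u·v with u ∈ W^0 and v ∈ Γ^1. -/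
/-!
Since `Φ` spans `V`, a reflection preserving `Φ` is determined by its root, so `Γ` permutes `Φ⁰`
and conjugates `s_α` to `s_{gα}`; hence `W⁰` is normal. Call a positive root `α` of `Φ⁰` simple if
`s_α` keeps every positive root off the line of `α` positive. The roots in a minimal generating set
of the cone spanned by the positive roots are simple, so an element of `Γ` outside `Γ¹` makes some
simple root `α` negative, and multiplying it by `s_α` lowers the number of its inversions. Thus
every element of `Γ` lies in `Γ¹` up to a product of simple reflections. Applied to `s_β`, this
yields a product of simple reflections that changes the sign of `β`; some factor causes the change,
so `β` is conjugate to a multiple of a simple root. Hence the simple reflections generate `W⁰`.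
Finally, by the exchange property, a product of simple reflections that preserves positivity can be
shortened until it is empty, so `W⁰ ∩ Γ¹ = 1`.
-/

open Module PointedCone
open scoped Pointwise

theorem exists_mem_pow_of_mem_closure {G : Type*} [Group G] {T : Set G} (hT : T⁻¹ = T) {w : G}
    (hw : w ∈ Subgroup.closure T) : ∃ n : ℕ, w ∈ T ^ n := by
  induction hw using Subgroup.closure_induction with
  | mem t ht => exact ⟨1, by rwa [pow_one]⟩
  | one => exact ⟨0, by rw [pow_zero]; rfl⟩
  | mul x y _ _ hx hy =>
    obtain ⟨m, hm⟩ := hx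
    obtain ⟨n, hn⟩ := hy
    exact ⟨m + n, pow_add T m n ▸ Set.mul_mem_mul hm hn⟩
  | inv x _ hx =>
    obtain ⟨n, hn⟩ := hx
    exact ⟨n, by rwa [← hT, inv_pow, Set.inv_mem_inv]⟩

section Cone

variable {𝕜 V : Type*} [Field 𝕜] [LinearOrder 𝕜] [IsStrictOrderedRing 𝕜]
  [AddCommGroup V] [Module 𝕜 V] {D P : Set V} {f : Dual 𝕜 V} {α x y : V}

theorem eq_zero_or_pos_of_mem_hull (hD : ∀ d ∈ D, 0 < f d) (hx : x ∈ hull 𝕜 D) :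
    x = 0 ∨ 0 < f x := by
  induction hx using Submodule.span_induction with
  | mem d hd => exact .inr (hD d hd)
  | zero => exact .inl rfl
  | add y z _ _ hy hz =>
    rcases hy with rfl | hy
    · simpa using hz
    rcases hz with rfl | hz
    · simpa using Or.inr hy
    · exact .inr (by simpa using add_pos hy hz)
  | smul c y _ hy =>
    rw [← Nonneg.coe_smul, smul_eq_zero, map_smul, smul_eq_mul]
    rcases hy with rfl | hy
    · exact .inl (.inr rfl)
    · exact c.2.eq_or_lt.imp (fun hc => .inl hc.symm) (mul_pos · hy)

variable (𝕜) in
theorem exists_subset_hull_forall_notMem_hull_diff (hP : P.Finite) :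
    ∃ D ⊆ P, P ⊆ hull 𝕜 D ∧ ∀ α ∈ D, α ∉ hull 𝕜 (D \ {α}) := by
  have hfin : {D | D ⊆ P ∧ P ⊆ hull 𝕜 D}.Finite := hP.finite_subsets.subset fun D hD => hD.1
  obtain ⟨D, hD⟩ := hfin.exists_minimal ⟨P, subset_rfl, subset_hull⟩
  refine ⟨D, hD.prop.1, hD.prop.2, fun α hα hmem => ?_⟩
  have hle : hull 𝕜 D ≤ hull 𝕜 (D \ {α}) := by
    refine Submodule.span_le.2 fun d hd => ?_
    obtain rfl | hne := eq_or_ne d α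
    exacts [hmem, subset_hull ⟨hd, hne⟩]
  exact (hD.le_of_le ⟨Set.sdiff_subset.trans hD.prop.1, hD.prop.2.trans hle⟩
    Set.sdiff_subset hα).2 rfl

theorem mem_span_singleton_of_add_eq_smul (hD : ∀ d ∈ D, 0 < f d) (hα : α ∈ D)
    (hirr : α ∉ hull 𝕜 (D \ {α})) (hx : x ∈ hull 𝕜 D) (hy : y ∈ hull 𝕜 D) {k : 𝕜}
    (hxy : x + y = k • α) : x ∈ 𝕜 ∙ α := by
  rw [← Set.insert_sdiff_self_of_mem hα] at hx hy
  obtain ⟨c, z, hz, rfl⟩ := Submodule.mem_span_insert.1 hx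
  obtain ⟨d, z', hz', rfl⟩ := Submodule.mem_span_insert.1 hy
  rw [← Nonneg.coe_smul] at hxy ⊢
  rw [← Nonneg.coe_smul d] at hxy
  have hsum : z + z' = (k - c - d) • α := by
    linear_combination (norm := module) hxy
  have hpos : ∀ w ∈ hull 𝕜 (D \ {α}), w = 0 ∨ 0 < f w :=
    fun w => eq_zero_or_pos_of_mem_hull fun v hv => hD v hv.1
  rcases lt_or_ge 0 (k - c - d) with hk | hk
  · refine absurd ?_ hirr
    have hmem := PointedCone.smul_mem _ (inv_nonneg.2 hk.le) (add_mem hz hz')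
    rwa [hsum, inv_smul_smul₀ hk.ne'] at hmem
  · have hf : f z + f z' ≤ 0 := by
      rw [← map_add, hsum, map_smul]
      exact mul_nonpos_of_nonpos_of_nonneg hk (hD α hα).le
    have hz0 : z = 0 := by
      refine (hpos z hz).resolve_right fun hzpos => ?_
      rcases hpos z' hz' with rfl | hz'pos
      · simp only [map_zero] at hf; linarith
      · linarith
    rw [hz0, add_zero]
    exact Submodule.smul_mem _ _ (Submodule.mem_span_singleton_self α)

end Cone

section Reflection

variable {𝕜 V : Type*} [Field 𝕜] [CharZero 𝕜] [AddCommGroup V] [Module 𝕜 V] {Φ : Set V}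
  {coroot : V → Dual 𝕜 V} {s : V → V ≃ₗ[𝕜] V}

theorem conj_reflection_eq_of_span_eq_top (hfin : Φ.Finite) (hspan : Submodule.span 𝕜 Φ = ⊤)
    (hcoroot : ∀ α ∈ Φ, coroot α α = 2) (hs : ∀ α ∈ Φ, ∀ x, s α x = x - coroot α x • α)
    (hmaps : ∀ α ∈ Φ, s α '' Φ = Φ) {g : V ≃ₗ[𝕜] V} (hg : g '' Φ = Φ) {α : V} (hα : α ∈ Φ) :
    g * s α * g⁻¹ = s (g α) := by
  have hgα : g α ∈ Φ := hg.subset ⟨α, hα, rfl⟩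
  have hcoroot_map : coroot (g α) = coroot α ∘ₗ g.symm.toLinearMap := by
    refine Dual.eq_of_preReflection_mapsTo (x := g α) hfin hspan (hcoroot _ hgα) ?_ ?_ ?_
    · intro β hβ
      rw [preReflection_apply, ← hs _ hgα]
      exact (hmaps _ hgα).subset ⟨β, hβ, rfl⟩
    · simp [hcoroot α hα]
    · intro β hβ
      obtain ⟨γ, hγ, rfl⟩ := hg.superset hβ
      have := hg.subset ⟨s α γ, (hmaps α hα).subset ⟨γ, hγ, rfl⟩, rfl⟩
      simpa [preReflection_apply, hs α hα] using this
  rw [mul_inv_eq_iff_eq_mul]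
  ext x
  simp [hs α hα, hs _ hgα, hcoroot_map]

end Reflection

/-- A finite set `R` of roots with reflections `s α`, stable under a group `Γ` that contains these
reflections and permutes them by conjugation. The maps `coroot` and `s` carry no information
outside `R`. -/
structure IsReflectionSystem {𝕜 V : Type*} [Field 𝕜] [AddCommGroup V] [Module 𝕜 V]
    (Γ : Subgroup (V ≃ₗ[𝕜] V)) (R : Set V) (coroot : V → Dual 𝕜 V) (s : V → V ≃ₗ[𝕜] V) :
    Prop where
  finite : R.Finite
  coroot_self : ∀ {α}, α ∈ R → coroot α α = 2
  reflection_apply : ∀ {α}, α ∈ R → ∀ x, s α x = x - coroot α x • α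
  reflection_mem : ∀ {α}, α ∈ R → s α ∈ Γ
  apply_mem : ∀ {g}, g ∈ Γ → ∀ {α}, α ∈ R → g α ∈ R
  conj_reflection : ∀ {g}, g ∈ Γ → ∀ {α}, α ∈ R → g * s α * g⁻¹ = s (g α)

theorem isReflectionSystem_of_span_eq_top {𝕜 V : Type*} [Field 𝕜] [CharZero 𝕜] [AddCommGroup V]
    [Module 𝕜 V] {Φ : Set V} {coroot : V → Dual 𝕜 V} {s : V → V ≃ₗ[𝕜] V}
    {Γ : Subgroup (V ≃ₗ[𝕜] V)} (hfin : Φ.Finite) (hspan : Submodule.span 𝕜 Φ = ⊤)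
    (hcoroot : ∀ α ∈ Φ, coroot α α = 2) (hs : ∀ α ∈ Φ, ∀ x, s α x = x - coroot α x • α)
    (hmaps : ∀ α ∈ Φ, s α '' Φ = Φ) (hΓ : ∀ g ∈ Γ, g '' Φ = Φ) :
    IsReflectionSystem Γ {α ∈ Φ | s α ∈ Γ} coroot s := by
  have hconj {g : V ≃ₗ[𝕜] V} (hg : g ∈ Γ) {α : V} (hα : α ∈ Φ) : g * s α * g⁻¹ = s (g α) :=
    conj_reflection_eq_of_span_eq_top hfin hspan hcoroot hs hmaps (hΓ g hg) hα
  exact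
    { finite := hfin.subset (Set.sep_subset _ _)
      coroot_self := fun hα => hcoroot _ hα.1
      reflection_apply := fun hα => hs _ hα.1
      reflection_mem := fun hα => hα.2
      apply_mem := fun {g} hg {α} hα => ⟨(hΓ g hg).subset ⟨α, hα.1, rfl⟩,
        hconj hg hα.1 ▸ mul_mem (mul_mem hg hα.2) (inv_mem hg)⟩
      conj_reflection := fun hg _ hα => hconj hg hα.1 }

section PositiveRoots

variable {𝕜 V : Type*} [Field 𝕜] [LinearOrder 𝕜] [AddCommGroup V] [Module 𝕜 V]

/-- The roots in `R` that are positive with respect to the functional `f`. -/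
def posRoots (R : Set V) (f : Dual 𝕜 V) : Set V := {α ∈ R | 0 < f α}

/-- The simple roots of `R`: those positive roots whose reflection keeps every positive root off
their own line positive. For non-reduced `R`, positive multiples of a simple root that lie in `R`
are simple as well. -/
def simpleRoots (R : Set V) (s : V → V ≃ₗ[𝕜] V) (f : Dual 𝕜 V) : Set V :=
  {α ∈ posRoots R f | ∀ β ∈ posRoots R f, β ∉ 𝕜 ∙ α → s α β ∈ posRoots R f}

/-- The inversions of `g`: the positive roots that `g` makes negative. -/
def inversions (R : Set V) (f : Dual 𝕜 V) (g : V ≃ₗ[𝕜] V) : Set V :=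
  {β ∈ posRoots R f | f (g β) < 0}

/-- The subgroup of `Γ` preserving the set of positive roots of `R`, called `Γ¹` in the paper. -/
def posStabilizer (Γ : Subgroup (V ≃ₗ[𝕜] V)) (R : Set V) (f : Dual 𝕜 V) : Subgroup (V ≃ₗ[𝕜] V) :=
  Γ ⊓ MulAction.stabilizer (V ≃ₗ[𝕜] V) (posRoots R f)

end PositiveRoots

namespace IsReflectionSystem

section Reflections

variable {𝕜 V : Type*} [Field 𝕜] [AddCommGroup V] [Module 𝕜 V] {Γ : Subgroup (V ≃ₗ[𝕜] V)}
  {R : Set V} {coroot : V → Dual 𝕜 V} {s : V → V ≃ₗ[𝕜] V} {g : V ≃ₗ[𝕜] V} {α β : V}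

theorem reflection_apply_self (h : IsReflectionSystem Γ R coroot s) (hα : α ∈ R) :
    s α α = -α := by
  rw [h.reflection_apply hα, h.coroot_self hα, two_smul, sub_add_cancel_left]

theorem reflection_mul_self (h : IsReflectionSystem Γ R coroot s) (hα : α ∈ R) :
    s α * s α = 1 := by
  ext x
  rw [LinearEquiv.mul_apply, h.reflection_apply hα x, map_sub, map_smul, h.reflection_apply_self hα,
    h.reflection_apply hα]
  simp

theorem neg_mem (h : IsReflectionSystem Γ R coroot s) (hα : α ∈ R) : -α ∈ R :=
  h.reflection_apply_self hα ▸ h.apply_mem (h.reflection_mem hα) hα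

theorem mul_reflection (h : IsReflectionSystem Γ R coroot s) (hg : g ∈ Γ) (hα : α ∈ R) :
    g * s α = s (g α) * g := by
  rw [← h.conj_reflection hg hα, inv_mul_cancel_right]

theorem reflection_neg (h : IsReflectionSystem Γ R coroot s) (hα : α ∈ R) : s (-α) = s α := by
  rw [← h.reflection_apply_self hα, ← h.conj_reflection (h.reflection_mem hα) hα,
    mul_inv_cancel_right]

-- The two reflections commute, and their product is a transvection along `α`.
theorem reflection_eq_of_mem_span_singleton [CharZero 𝕜] (h : IsReflectionSystem Γ R coroot s)
    (hα : α ∈ R) (hβ : β ∈ R) (hspan : β ∈ 𝕜 ∙ α) : s β = s α := by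
  obtain ⟨c, rfl⟩ := Submodule.mem_span_singleton.1 hspan
  have hcomm : s α * s (c • α) = s (c • α) * s α := by
    rw [h.mul_reflection (h.reflection_mem hα) hβ, map_smul, h.reflection_apply_self hα, smul_neg,
      h.reflection_neg hβ]
  have hc : c ≠ 0 := by
    rintro rfl
    simpa using h.coroot_self hβ
  have hβα : s (c • α) α = -α :=
    smul_right_injective V hc <| by simpa using h.reflection_apply_self hβ
  ext x
  have hx := LinearEquiv.congr_fun hcomm x
  simp only [LinearEquiv.mul_apply, h.reflection_apply hα x, h.reflection_apply hβ x, map_sub,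
    map_smul, h.reflection_apply_self hα, hβα] at hx ⊢
  linear_combination (norm := module) (-(1 / 2) : 𝕜) • hx

theorem reflection_apply_mem_iff {H : Subgroup (V ≃ₗ[𝕜] V)} (h : IsReflectionSystem Γ R coroot s)
    (hH : H ≤ Γ) (hg : g ∈ H) (hα : α ∈ R) : s (g α) ∈ H ↔ s α ∈ H := by
  rw [← h.conj_reflection (hH hg) hα, H.mul_mem_cancel_right (H.inv_mem hg),
    H.mul_mem_cancel_left hg]

theorem closure_image_le (h : IsReflectionSystem Γ R coroot s) :
    Subgroup.closure (s '' R) ≤ Γ := by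
  rw [Subgroup.closure_le]
  rintro _ ⟨α, hα, rfl⟩
  exact h.reflection_mem hα

theorem le_normalizer_closure_image (h : IsReflectionSystem Γ R coroot s) :
    Γ ≤ Subgroup.normalizer (Subgroup.closure (s '' R)) := by
  rw [Subgroup.le_normalizer_closure_iff]
  rintro g hg _ ⟨α, hα, rfl⟩
  rw [h.conj_reflection hg hα]
  exact Subgroup.subset_closure ⟨g α, h.apply_mem hg hα, rfl⟩

end Reflections

section SimpleReflections

variable {𝕜 V : Type*} [Field 𝕜] [LinearOrder 𝕜] [AddCommGroup V] [Module 𝕜 V]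
  {Γ : Subgroup (V ≃ₗ[𝕜] V)} {R : Set V} {coroot : V → Dual 𝕜 V} {s : V → V ≃ₗ[𝕜] V}
  {f : Dual 𝕜 V} {α β : V}

theorem inv_image_simpleRoots (h : IsReflectionSystem Γ R coroot s) :
    (s '' simpleRoots R s f)⁻¹ = s '' simpleRoots R s f := by
  rw [← Set.image_inv_eq_inv, Set.image_image]
  exact Set.image_congr fun α hα => inv_eq_of_mul_eq_one_left (h.reflection_mul_self hα.1.1)

theorem closure_image_simpleRoots_le (h : IsReflectionSystem Γ R coroot s) :
    Subgroup.closure (s '' simpleRoots R s f) ≤ Γ :=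
  (Subgroup.closure_mono (Set.image_mono fun _ hα => hα.1.1)).trans h.closure_image_le

theorem reflection_apply_mem_posRoots_iff (h : IsReflectionSystem Γ R coroot s)
    (hα : α ∈ simpleRoots R s f) (hβα : β ∉ 𝕜 ∙ α) :
    s α β ∈ posRoots R f ↔ β ∈ posRoots R f := by
  have hinv : s α (s α β) = β := LinearEquiv.congr_fun (h.reflection_mul_self hα.1.1) β
  refine ⟨fun hβ => hinv ▸ hα.2 _ hβ fun hspan => hβα ?_, fun hβ => hα.2 β hβ hβα⟩
  obtain ⟨c, hc⟩ := Submodule.mem_span_singleton.1 hspan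
  rw [← hinv, ← hc, map_smul, h.reflection_apply_self hα.1.1]
  exact Submodule.smul_mem _ _ (Submodule.neg_mem _ (Submodule.mem_span_singleton_self α))

end SimpleReflections

variable {𝕜 V : Type*} [Field 𝕜] [LinearOrder 𝕜] [IsStrictOrderedRing 𝕜]
  [AddCommGroup V] [Module 𝕜 V] {Γ : Subgroup (V ≃ₗ[𝕜] V)} {R : Set V} {coroot : V → Dual 𝕜 V}
  {s : V → V ≃ₗ[𝕜] V} {f : Dual 𝕜 V} {g u w : V ≃ₗ[𝕜] V} {α β : V}

theorem neg_mem_posRoots (h : IsReflectionSystem Γ R coroot s) (hα : α ∈ R) (hneg : f α < 0) :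
    -α ∈ posRoots R f :=
  ⟨h.neg_mem hα, by simpa using hneg⟩

theorem posRoots_subset_hull_simpleRoots (h : IsReflectionSystem Γ R coroot s)
    (hf : ∀ α ∈ R, f α ≠ 0) : posRoots R f ⊆ hull 𝕜 (simpleRoots R s f) := by
  obtain ⟨D, hDP, hPD, hirr⟩ := exists_subset_hull_forall_notMem_hull_diff 𝕜
    (h.finite.subset fun α (hα : α ∈ posRoots R f) => hα.1)
  refine hPD.trans (Submodule.span_mono fun α hα => ⟨hDP hα, fun β hβ hβα => ?_⟩)
  have hαR := (hDP hα).1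
  have hsβ : s α β ∈ R := h.apply_mem (h.reflection_mem hαR) hβ.1
  refine ⟨hsβ, (hf _ hsβ).lt_or_gt.resolve_left fun hneg => hβα ?_⟩
  refine mem_span_singleton_of_add_eq_smul (fun d hd => (hDP hd).2) hα (hirr α hα) (hPD hβ)
    (hPD (h.neg_mem_posRoots hsβ hneg)) (k := coroot α β) ?_
  rw [h.reflection_apply hαR]
  abel

theorem mem_posStabilizer_of_forall_simpleRoots (h : IsReflectionSystem Γ R coroot s)
    (hf : ∀ α ∈ R, f α ≠ 0) (hg : g ∈ Γ) (hsimple : ∀ α ∈ simpleRoots R s f, 0 < f (g α)) :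
    g ∈ posStabilizer Γ R f := by
  refine ⟨hg, (MulAction.mem_stabilizer_set_iff_smul_set_subset
    (h.finite.subset fun α hα => hα.1)).2 ?_⟩
  rintro _ ⟨β, hβ, rfl⟩
  refine ⟨h.apply_mem hg hβ.1, ?_⟩
  refine (eq_zero_or_pos_of_mem_hull (f := f ∘ₗ g.toLinearMap) hsimple
    (h.posRoots_subset_hull_simpleRoots hf hβ)).resolve_left ?_
  rintro rfl
  simpa using hβ.2

theorem ncard_inversions_mul_lt (h : IsReflectionSystem Γ R coroot s)
    (hα : α ∈ simpleRoots R s f) (hneg : f (g α) < 0) :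
    (inversions R f (g * s α)).ncard < (inversions R f g).ncard := by
  have hαR := hα.1.1
  have hoff : ∀ β ∈ inversions R f (g * s α), β ∉ 𝕜 ∙ α := by
    intro β hβ hspan
    obtain ⟨c, rfl⟩ := Submodule.mem_span_singleton.1 hspan
    have hc : 0 < c := by
      have := hβ.1.2
      rw [map_smul, smul_eq_mul] at this
      exact pos_of_mul_pos_left this hα.1.2.le
    have hlt := hβ.2
    simp only [LinearEquiv.mul_apply, map_smul, h.reflection_apply_self hαR, map_neg,
      smul_eq_mul] at hlt
    linarith [mul_neg_of_pos_of_neg hc hneg]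
  rw [← Set.ncard_image_of_injective _ (s α).injective]
  refine Set.ncard_lt_ncard ?_ (h.finite.subset fun β hβ => hβ.1.1)
  refine (Set.ssubset_iff_of_subset ?_).2 ⟨α, ⟨hα.1, hneg⟩, ?_⟩
  · rintro _ ⟨β, hβ, rfl⟩
    exact ⟨hα.2 β hβ.1 (hoff β hβ), hβ.2⟩
  · rintro ⟨β, hβ, hβα⟩
    refine hoff β hβ ?_
    have : β = -α := (s α).injective (by rw [hβα, map_neg, h.reflection_apply_self hαR, neg_neg])
    exact this ▸ Submodule.neg_mem _ (Submodule.mem_span_singleton_self α)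

theorem exists_mul_mem_posStabilizer (h : IsReflectionSystem Γ R coroot s)
    (hf : ∀ α ∈ R, f α ≠ 0) (hg : g ∈ Γ) :
    ∃ u ∈ Subgroup.closure (s '' simpleRoots R s f), g * u ∈ posStabilizer Γ R f := by
  induction hn : (inversions R f g).ncard using Nat.strong_induction_on generalizing g with
  | _ n ih =>
    by_cases hpos : ∀ α ∈ simpleRoots R s f, 0 < f (g α)
    · exact ⟨1, one_mem _, by
        simpa using h.mem_posStabilizer_of_forall_simpleRoots hf hg hpos⟩
    push Not at hpos
    obtain ⟨α, hα, hle⟩ := hpos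
    have hαR := hα.1.1
    have hneg : f (g α) < 0 := hle.lt_of_ne (hf _ (h.apply_mem hg hαR))
    obtain ⟨u, hu, hgu⟩ := ih _ (hn ▸ h.ncard_inversions_mul_lt hα hneg)
      (mul_mem hg (h.reflection_mem hαR)) rfl
    exact ⟨s α * u, mul_mem (Subgroup.subset_closure ⟨α, hα, rfl⟩) hu, by rwa [← mul_assoc]⟩

-- Some factor of `u` changes the sign of a conjugate of `β`, which is thus a multiple of a simple
-- root.
theorem reflection_mem_closure_of_not_apply_mem_posRoots_iff
    (h : IsReflectionSystem Γ R coroot s)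
    (hu : u ∈ Subgroup.closure (s '' simpleRoots R s f)) (hβ : β ∈ R)
    (hsign : ¬(u β ∈ posRoots R f ↔ β ∈ posRoots R f)) :
    s β ∈ Subgroup.closure (s '' simpleRoots R s f) := by
  have hle := h.closure_image_simpleRoots_le (f := f)
  induction hu using Subgroup.closure_induction generalizing β with
  | mem _ hx =>
    obtain ⟨α, hα, rfl⟩ := hx
    have hspan : β ∈ 𝕜 ∙ α := by
      contrapose! hsign
      exact h.reflection_apply_mem_posRoots_iff hα hsign
    rw [h.reflection_eq_of_mem_span_singleton hα.1.1 hβ hspan]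
    exact Subgroup.subset_closure ⟨α, hα, rfl⟩
  | one => exact absurd Iff.rfl hsign
  | mul u v _ hv ihu ihv =>
    by_cases hvβ : v β ∈ posRoots R f ↔ β ∈ posRoots R f
    · rw [← hvβ] at hsign
      exact (h.reflection_apply_mem_iff hle hv hβ).1 (ihu (h.apply_mem (hle hv) hβ) hsign)
    · exact ihv hβ hvβ
  | inv u hu ih =>
    have hu' := inv_mem hu
    refine (h.reflection_apply_mem_iff hle hu' hβ).1 (ih (h.apply_mem (hle hu') hβ) ?_)
    rwa [← LinearEquiv.mul_apply, mul_inv_cancel, LinearEquiv.coe_one, id_eq, Iff.comm]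

theorem closure_image_simpleRoots_eq (h : IsReflectionSystem Γ R coroot s)
    (hf : ∀ α ∈ R, f α ≠ 0) :
    Subgroup.closure (s '' simpleRoots R s f) = Subgroup.closure (s '' R) := by
  refine le_antisymm (Subgroup.closure_mono (Set.image_mono fun _ hα => hα.1.1)) ?_
  rw [Subgroup.closure_le]
  rintro _ ⟨β, hβ, rfl⟩
  obtain ⟨u, hu, hsu⟩ := h.exists_mul_mem_posStabilizer hf (h.reflection_mem hβ)
  refine h.reflection_mem_closure_of_not_apply_mem_posRoots_iff (inv_mem hu) hβ ?_
  have happly : (s β * u) • u⁻¹ β = -β := by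
    rw [LinearEquiv.smul_def, ← LinearEquiv.mul_apply, mul_inv_cancel_right,
      h.reflection_apply_self hβ]
  rw [← MulAction.mem_stabilizer_set.1 hsu.2, happly]
  intro hiff
  rcases (hf β hβ).lt_or_gt with hneg | hpos
  · exact hneg.not_gt (hiff.1 (h.neg_mem_posRoots hβ hneg)).2
  · exact (neg_neg_iff_pos.2 hpos).not_gt (map_neg f β ▸ (hiff.2 ⟨hβ, hpos⟩).2)

theorem exists_lt_mul_reflection_mem_pow (h : IsReflectionSystem Γ R coroot s)
    (hf : ∀ α ∈ R, f α ≠ 0) {n : ℕ} (hw : w ∈ (s '' simpleRoots R s f) ^ n)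
    (hα : α ∈ simpleRoots R s f) (hneg : f (w α) < 0) :
    ∃ m < n, w * s α ∈ (s '' simpleRoots R s f) ^ m := by
  induction n generalizing w with
  | zero =>
    rw [pow_zero, Set.mem_one] at hw
    exact absurd hα.1.2 (hw ▸ hneg).not_gt
  | succ n ih =>
    rw [pow_succ'] at hw
    obtain ⟨_, ⟨γ, hγ, rfl⟩, t, ht, rfl⟩ := hw
    have htΓ : t ∈ Γ :=
      h.closure_image_simpleRoots_le (Subgroup.pow_subset Subgroup.subset_closure ht)
    have htα := h.apply_mem htΓ hα.1.1
    rcases (hf _ htα).lt_or_gt with htneg | htpos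
    · obtain ⟨m, hm, hmem⟩ := ih ht htneg
      refine ⟨m + 1, by lia, ?_⟩
      rw [pow_succ', mul_assoc]
      exact Set.mul_mem_mul ⟨γ, hγ, rfl⟩ hmem
    · have hspan : t α ∈ 𝕜 ∙ γ := by
        by_contra hspan
        exact hneg.not_gt (hγ.2 _ ⟨htα, htpos⟩ hspan).2
      refine ⟨n, n.lt_succ_self, ?_⟩
      rwa [mul_assoc, h.mul_reflection htΓ hα.1.1,
        h.reflection_eq_of_mem_span_singleton hγ.1.1 htα hspan, ← mul_assoc,
        h.reflection_mul_self hγ.1.1, one_mul]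

theorem eq_one_of_mem_pow_of_mem_posStabilizer (h : IsReflectionSystem Γ R coroot s)
    (hf : ∀ α ∈ R, f α ≠ 0) {n : ℕ} (hw : w ∈ (s '' simpleRoots R s f) ^ n)
    (hwpos : w ∈ posStabilizer Γ R f) : w = 1 := by
  induction n using Nat.strong_induction_on with
  | _ n ih =>
    rcases n with _ | n
    · simpa using hw
    rw [pow_succ] at hw
    obtain ⟨t, ht, _, ⟨α, hα, rfl⟩, rfl⟩ := hw
    have htα : f (t α) < 0 := by
      have := ((MulAction.mem_stabilizer_set.1 hwpos.2 α).2 hα.1).2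
      simpa [h.reflection_apply_self hα.1.1] using this
    obtain ⟨m, hm, hmem⟩ := h.exists_lt_mul_reflection_mem_pow hf ht hα htα
    exact ih m (by lia) hmem

theorem disjoint_closure_image_posStabilizer (h : IsReflectionSystem Γ R coroot s)
    (hf : ∀ α ∈ R, f α ≠ 0) :
    Disjoint (Subgroup.closure (s '' R)) (posStabilizer Γ R f) := by
  rw [Subgroup.disjoint_def, ← h.closure_image_simpleRoots_eq hf]
  intro w hw hwpos
  obtain ⟨n, hn⟩ := exists_mem_pow_of_mem_closure h.inv_image_simpleRoots hw
  exact h.eq_one_of_mem_pow_of_mem_posStabilizer hf hn hwpos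

theorem existsUnique_mul_eq (h : IsReflectionSystem Γ R coroot s) (hf : ∀ α ∈ R, f α ≠ 0)
    (hg : g ∈ Γ) : ∃! p : (V ≃ₗ[𝕜] V) × (V ≃ₗ[𝕜] V),
      p.1 ∈ Subgroup.closure (s '' R) ∧ p.2 ∈ posStabilizer Γ R f ∧ g = p.1 * p.2 := by
  obtain ⟨u, hu, hgu⟩ := h.exists_mul_mem_posStabilizer hf (inv_mem hg)
  rw [h.closure_image_simpleRoots_eq hf] at hu
  refine ⟨(u, (g⁻¹ * u)⁻¹), ⟨hu, inv_mem hgu, by group⟩, ?_⟩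
  rintro ⟨u', v'⟩ ⟨hu', hv', hg'⟩
  have heq := Subgroup.mul_injective_of_disjoint (h.disjoint_closure_image_posStabilizer hf)
    (a₁ := (⟨u', hu'⟩, ⟨v', hv'⟩)) (a₂ := (⟨u, hu⟩, ⟨_, inv_mem hgu⟩))
    (by simpa using hg'.symm)
  simpa using heq

end IsReflectionSystem

theorem Gamma_semidirect_product_general
    {𝕜 V : Type*} [Field 𝕜] [LinearOrder 𝕜] [IsStrictOrderedRing 𝕜] [AddCommGroup V] [Module 𝕜 V]
    {Φ : Set V} (hfin : Φ.Finite) (hspan : Submodule.span 𝕜 Φ = ⊤)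
    {coroot : V → Dual 𝕜 V} (hcoroot : ∀ α ∈ Φ, coroot α α = 2)
    {s : V → (V ≃ₗ[𝕜] V)} (hs : ∀ α ∈ Φ, ∀ x : V, s α x = x - coroot α x • α)
    (hmaps : ∀ α ∈ Φ, ⇑(s α) '' Φ = Φ)
    {Γ : Subgroup (V ≃ₗ[𝕜] V)} (hΓ : ∀ g ∈ Γ, ⇑g '' Φ = Φ)
    {Φ0 : Set V} (hΦ0 : Φ0 = {α ∈ Φ | s α ∈ Γ})
    {W0 : Subgroup (V ≃ₗ[𝕜] V)} (hW0 : W0 = Subgroup.closure (s '' Φ0))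
    {f : Dual 𝕜 V} (hf : ∀ α ∈ Φ0, f α ≠ 0)
    {Φ0plus : Set V} (hΦ0plus : Φ0plus = {α ∈ Φ0 | 0 < f α})
    {Γ1 : Set (V ≃ₗ[𝕜] V)} (hΓ1 : Γ1 = {g | g ∈ Γ ∧ ⇑g '' Φ0plus = Φ0plus}) :
    ((1 : V ≃ₗ[𝕜] V) ∈ Γ1 ∧ (∀ a ∈ Γ1, ∀ b ∈ Γ1, a * b ∈ Γ1) ∧ (∀ a ∈ Γ1, a⁻¹ ∈ Γ1)) ∧
    (W0 ≤ Γ ∧ ∀ g ∈ Γ, ∀ w ∈ W0, g * w * g⁻¹ ∈ W0) ∧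
    (∀ x : V ≃ₗ[𝕜] V, x ∈ W0 → x ∈ Γ1 → x = 1) ∧
    (∀ g ∈ Γ, ∃! p : (V ≃ₗ[𝕜] V) × (V ≃ₗ[𝕜] V),
      p.1 ∈ W0 ∧ p.2 ∈ Γ1 ∧ g = p.1 * p.2) := by
  have h : IsReflectionSystem Γ Φ0 coroot s := hΦ0 ▸
    isReflectionSystem_of_span_eq_top hfin hspan hcoroot hs hmaps hΓ
  obtain rfl : Γ1 = posStabilizer Γ Φ0 f := by rw [hΓ1, hΦ0plus]; rfl
  subst hW0
  exact ⟨⟨one_mem _, fun _ ha _ hb => mul_mem ha hb, fun _ ha => inv_mem ha⟩,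
    ⟨h.closure_image_le, Subgroup.le_normalizer_iff.1 h.le_normalizer_closure_image⟩,
    fun _ => Subgroup.disjoint_def.1 (h.disjoint_closure_image_posStabilizer hf),
    fun _ => h.existsUnique_mul_eq hf⟩

theorem Gamma_semidirect_product
    (V : Type*) [AddCommGroup V] [Module ℝ V] [FiniteDimensional ℝ V]
    (Φ : Set V) (hfin : Φ.Finite) (h0 : (0 : V) ∉ Φ)
    (hspan : Submodule.span ℝ Φ = ⊤)
    (coroot : V → Module.Dual ℝ V)
    (hcoroot : ∀ α ∈ Φ, coroot α α = 2)
    (s : V → (V ≃ₗ[ℝ] V))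
    (hs : ∀ α ∈ Φ, ∀ x : V, s α x = x - coroot α x • α)
    (hmaps : ∀ α ∈ Φ, ⇑(s α) '' Φ = Φ)
    (hred : ∀ α ∈ Φ, ∀ t : ℝ, t • α ∈ Φ → t = 1 ∨ t = -1)
    (Γ : Subgroup (V ≃ₗ[ℝ] V)) (hΓ : ∀ g ∈ Γ, ⇑g '' Φ = Φ)
    (Φ0 : Set V) (hΦ0 : Φ0 = {α ∈ Φ | s α ∈ Γ})
    (W0 : Subgroup (V ≃ₗ[ℝ] V)) (hW0 : W0 = Subgroup.closure (s '' Φ0))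
    (f : Module.Dual ℝ V) (hf : ∀ α ∈ Φ0, f α ≠ 0)
    (Φ0plus : Set V) (hΦ0plus : Φ0plus = {α ∈ Φ0 | 0 < f α})
    (Γ1 : Set (V ≃ₗ[ℝ] V)) (hΓ1 : Γ1 = {g | g ∈ Γ ∧ ⇑g '' Φ0plus = Φ0plus}) :
    -- Γ¹ is a subgroup (of Γ):
    ((1 : V ≃ₗ[ℝ] V) ∈ Γ1 ∧ (∀ a ∈ Γ1, ∀ b ∈ Γ1, a * b ∈ Γ1) ∧ (∀ a ∈ Γ1, a⁻¹ ∈ Γ1)) ∧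
    -- W⁰ is a normal subgroup of Γ:
    (W0 ≤ Γ ∧ ∀ g ∈ Γ, ∀ w ∈ W0, g * w * g⁻¹ ∈ W0) ∧
    -- W⁰ ∩ Γ¹ = {1}:
    (∀ x : V ≃ₗ[ℝ] V, x ∈ W0 → x ∈ Γ1 → x = 1) ∧
    -- unique factorization g = u * v with u ∈ W⁰, v ∈ Γ¹:
    (∀ g ∈ Γ, ∃! p : (V ≃ₗ[ℝ] V) × (V ≃ₗ[ℝ] V),
      p.1 ∈ W0 ∧ p.2 ∈ Γ1 ∧ g = p.1 * p.2) :=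
  Gamma_semidirect_product_general hfin hspan hcoroot hs hmaps hΓ hΦ0 hW0 hf hΦ0plus hΓ1
end
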